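/- If X ⊆ ℝ (with the subspace topology) satisfies Ufin(Γ,Γ) and no perfect subset of ℝ is contained in X, then X is perfectly meager: for every perfect set P ⊆ ℝ, the set X ∩ P is meager in the subspace topology of P. -/

import Mathlib

open Set

universe u

variable {X : Type u} [TopologicalSpace X]

/-- A γ-cover: a countably infinite family of open sets such that every point
belongs to all but finitely many members. -/
def IsGammaCover (U : Set (Set X)) : Prop :=
  U.Countable ∧ U.Infinite ∧ (∀ u ∈ U, IsOpen u) ∧ ∀ x : X, {u ∈ U | x ∉ u}.Finite

/-- A large cover: a countable family of open sets such that every point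
belongs to infinitely many members. -/
def IsLargeCover (U : Set (Set X)) : Prop :=
  U.Countable ∧ (∀ u ∈ U, IsOpen u) ∧ ∀ x : X, {u ∈ U | x ∈ u}.Infinite

/-- An ω-cover: a countable family of open sets, not containing `univ`, such
that every finite subset of the space is contained in some member. -/
def IsOmegaCover (U : Set (Set X)) : Prop :=
  U.Countable ∧ (∀ u ∈ U, IsOpen u) ∧ univ ∉ U ∧
    ∀ F : Set X, F.Finite → ∃ u ∈ U, F ⊆ u

/-- A (countable) open cover. -/
def IsCountableOpenCover (U : Set (Set X)) : Prop :=
  U.Countable ∧ (∀ u ∈ U, IsOpen u) ∧ ⋃₀ U = univ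

/-- The selection principle S1(A,B). -/
def S1 (A B : Set (Set X) → Prop) : Prop :=
  ∀ U : ℕ → Set (Set X), (∀ n, A (U n)) →
    ∃ V : ℕ → Set X, (∀ n, V n ∈ U n) ∧ B (range V)

/-- The selection principle Sfin(A,B). -/
def Sfin (A B : Set (Set X) → Prop) : Prop :=
  ∀ U : ℕ → Set (Set X), (∀ n, A (U n)) →
    ∃ V : ℕ → Set (Set X), (∀ n, (V n).Finite ∧ V n ⊆ U n) ∧ B (⋃ n, V n)

/-- The selection principle Ufin(Γ,B). -/
def Ufin (B : Set (Set X) → Prop) : Prop :=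
  ∀ U : ℕ → Set (Set X), (∀ n, IsGammaCover (U n)) →
    ∃ V : ℕ → Set (Set X), (∀ n, (V n).Finite ∧ V n ⊆ U n) ∧
      ((∃ n, ⋃₀ (V n) = univ) ∨ B (range fun n => ⋃₀ (V n)))

/-- A perfect set of reals: nonempty, closed, and without isolated points. -/
def IsPerfectSet (P : Set ℝ) : Prop :=
  P.Nonempty ∧ IsClosed P ∧ ∀ x ∈ P, x ∈ closure (P \ {x})

/-!
The principle `Ufin(Γ,Γ)` is the Hurewicz property: from a sequence of increasing open covers of `X`
one can choose one member of each so that every point lies in all but finitely many of the chosen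
sets. Applying this to exhaustions of open sets by closed sets, one finds between `X` and any `G_δ`
set containing it an `F_σ` set. If `X` contains no perfect set, then `P \ X` is dense in the perfect
set `P`, so it has a countable subset `D` that is dense in `P`. Taking the complement of `D` as the
`G_δ` set covers `X` by countably many closed sets that miss `D`, and their traces on `P` are
nowhere dense.
-/

open Filter TopologicalSpace

lemma exists_sUnion_subset_of_finite_subset_range {α : Type*} {u : ℕ → Set α} (hmono : Monotone u)
    {V : Set (Set α)} (hfin : V.Finite) (hV : V ⊆ range u) : ∃ m, ⋃₀ V ⊆ u m := by
  have := hfin.to_subtype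
  choose i hi using fun v : V => hV v.2
  obtain ⟨m, hm⟩ := Finite.exists_le i
  exact ⟨m, sUnion_subset fun v hv => (hi ⟨v, hv⟩).ge.trans (hmono (hm ⟨v, hv⟩))⟩

lemma isGammaCover_range_of_monotone {u : ℕ → Set X} (hopen : ∀ m, IsOpen (u m))
    (hmono : Monotone u) (hcov : ⋃ m, u m = univ) (hne : ∀ m, u m ≠ univ) :
    IsGammaCover (range u) := by
  refine ⟨countable_range u, fun hfin => ?_, forall_mem_range.2 hopen, fun x => ?_⟩
  · obtain ⟨m, hm⟩ := exists_sUnion_subset_of_finite_subset_range hmono hfin Subset.rfl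
    rw [sUnion_range, hcov] at hm
    exact hne m (univ_subset_iff.1 hm)
  · obtain ⟨m, hm⟩ := mem_iUnion.1 (hcov.ge (mem_univ x))
    refine ((finite_Iio m).image u).subset ?_
    rintro _ ⟨⟨k, rfl⟩, hk⟩
    exact ⟨k, not_le.1 fun hmk => hk (hmono hmk hm), rfl⟩

/-- The sequence `w` may repeat sets, and a γ-cover only counts the distinct ones: a point can be
missed by infinitely many `w n`, hence the passage to the indices `φ k`. -/
lemma IsGammaCover.exists_injective_eventually_mem {w : ℕ → Set X} (hw : IsGammaCover (range w)) :
    ∃ φ : ℕ → ℕ, φ.Injective ∧ ∀ x, ∀ᶠ k in atTop, x ∈ w (φ k) := by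
  obtain ⟨-, hinf, -, hfin⟩ := hw
  let e := hinf.natEmbedding
  choose φ hφ using fun k => (e k).2
  have hinj : (w ∘ φ).Injective := fun a b hab =>
    e.injective (Subtype.ext ((hφ a).symm.trans (hab.trans (hφ b))))
  refine ⟨φ, hinj.of_comp, fun x => ?_⟩
  rw [← Nat.cofinite_eq_atTop]
  exact ((hfin x).preimage hinj.injOn).subset fun k hk => ⟨mem_range_self (φ k), hk⟩

lemma Ufin.exists_injective_eventually_mem (hX : Ufin (X := X) IsGammaCover) {u : ℕ → ℕ → Set X}
    (hopen : ∀ n m, IsOpen (u n m)) (hmono : ∀ n, Monotone (u n))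
    (hcov : ∀ n, ⋃ m, u n m = univ) (hne : ∀ n m, u n m ≠ univ) :
    ∃ φ M : ℕ → ℕ, φ.Injective ∧ ∀ x, ∀ᶠ k in atTop, x ∈ u (φ k) (M k) := by
  obtain ⟨V, hV, hVcov⟩ := hX _ fun n =>
    isGammaCover_range_of_monotone (hopen n) (hmono n) (hcov n) (hne n)
  choose M hM using fun n =>
    exists_sUnion_subset_of_finite_subset_range (hmono n) (hV n).1 (hV n).2
  have hγ : IsGammaCover (range fun n => ⋃₀ V n) := hVcov.resolve_left fun ⟨n, hn⟩ =>
    hne n (M n) (univ_subset_iff.1 (hn ▸ hM n))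
  obtain ⟨φ, hφ, hmem⟩ := hγ.exists_injective_eventually_mem
  exact ⟨φ, M ∘ φ, hφ, fun x => (hmem x).mono fun k hk => hM (φ k) hk⟩

lemma Ufin.exists_eventually_mem_of_antitone (hX : Ufin (X := X) IsGammaCover)
    {u : ℕ → ℕ → Set X} (hopen : ∀ n m, IsOpen (u n m)) (hmono : ∀ n, Monotone (u n))
    (hanti : Antitone u) (hcov : ∀ n, ⋃ m, u n m = univ) :
    ∃ M : ℕ → ℕ, ∀ x, ∀ᶠ n in atTop, x ∈ u n (M n) := by
  by_cases htriv : ∀ n, ∃ m, u n m = univ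
  · choose M hM using htriv
    exact ⟨M, fun x => .of_forall fun n => hM n ▸ mem_univ x⟩
  push Not at htriv
  obtain ⟨N, hN⟩ := htriv
  obtain ⟨φ, M, hφ, hmem⟩ := hX.exists_injective_eventually_mem
    (fun n => hopen (N + n)) (fun n => hmono (N + n)) (fun n => hcov (N + n))
    fun n m h => hN m (univ_subset_iff.1 (h ▸ hanti (Nat.le_add_right N n) m))
  -- As `u` is antitone, the member selected at an index `φ k ≥ n` also serves at the index `n`.
  have hlate : ∀ n, ∃ k, n ≤ k ∧ n ≤ φ k := fun n =>
    ((eventually_ge_atTop n).and (hφ.nat_tendsto_atTop.eventually_ge_atTop n)).exists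
  choose k hk hφk using hlate
  refine ⟨M ∘ k, fun x => ?_⟩
  filter_upwards [(tendsto_atTop_mono hk tendsto_id).eventually (hmem x)] with n hn
  exact hanti ((hφk n).trans (Nat.le_add_left _ N)) _ hn

theorem Ufin.exists_eventually_mem (hX : Ufin (X := X) IsGammaCover) {u : ℕ → ℕ → Set X}
    (hopen : ∀ n m, IsOpen (u n m)) (hmono : ∀ n, Monotone (u n))
    (hcov : ∀ n, ⋃ m, u n m = univ) : ∃ M : ℕ → ℕ, ∀ x, ∀ᶠ n in atTop, x ∈ u n (M n) := by
  let w : ℕ → ℕ → Set X := fun n m => dissipate (u · m) n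
  have hwcov : ∀ n, ⋃ m, w n m = univ := fun n => eq_univ_of_forall fun x => by
    have hev : ∀ i, ∀ᶠ m in atTop, x ∈ u i m := fun i => by
      obtain ⟨m, hm⟩ := mem_iUnion.1 ((hcov i).ge (mem_univ x))
      exact (eventually_ge_atTop m).mono fun k hk => hmono i hk hm
    obtain ⟨m, hm⟩ := ((eventually_all_finite (finite_Iic n)).2 fun i _ => hev i).exists
    exact mem_iUnion.2 ⟨m, mem_dissipate.2 hm⟩
  obtain ⟨M, hM⟩ := hX.exists_eventually_mem_of_antitone (u := w)
    (fun n m => (finite_Iic n).isOpen_biInter fun i _ => hopen i m)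
    (fun n _ _ h => iInter₂_mono fun i _ => hmono i h)
    (fun _ _ h m => antitone_dissipate (s := (u · m)) h) hwcov
  exact ⟨M, fun x => (hM x).mono fun n hn => mem_dissipate.1 hn n le_rfl⟩

section Ambient

variable {E : Type*} [TopologicalSpace E] {A P : Set E}

lemma exists_monotone_isClosed_iUnion_interior_of_isOpen [PerfectlyNormalSpace E]
    {U : Set E} (hU : IsOpen U) : ∃ C : ℕ → Set E, Monotone C ∧ (∀ m, IsClosed (C m)) ∧
      (∀ m, C m ⊆ U) ∧ U ⊆ ⋃ m, interior (C m) := by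
  obtain ⟨f, hf, hf01⟩ :=
    perfectlyNormalSpace_iff_forall_isClosed_preimage_zero.1 ‹_› Uᶜ hU.isClosed_compl
  have hmemU : ∀ x, x ∈ U ↔ 0 < f x := fun x => by
    rw [(hf01 x).1.lt_iff_ne', ← not_iff_not, not_not, ← mem_compl_iff, hf]
    rfl
  refine ⟨fun m => f ⁻¹' Ici (1 / ((m : ℝ) + 1)),
    fun m k hmk => preimage_mono (Ici_subset_Ici.2 (Nat.one_div_le_one_div hmk)),
    fun m => isClosed_Ici.preimage f.continuous,
    fun m x hx => (hmemU x).2 (Nat.one_div_pos_of_nat.trans_le hx), fun x hx => ?_⟩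
  obtain ⟨m, hm⟩ := exists_nat_one_div_lt ((hmemU x).1 hx)
  have hsub : f ⁻¹' Ioi (1 / ((m : ℝ) + 1)) ⊆ f ⁻¹' Ici (1 / ((m : ℝ) + 1)) :=
    preimage_mono Ioi_subset_Ici_self
  exact mem_iUnion.2 ⟨m, interior_maximal hsub (isOpen_Ioi.preimage f.continuous) hm⟩

theorem Ufin.exists_isClosed_subset_iUnion [PerfectlyNormalSpace E]
    (hA : Ufin (X := A) IsGammaCover) {G : Set E} (hG : IsGδ G) (hAG : A ⊆ G) :
    ∃ F : ℕ → Set E, (∀ k, IsClosed (F k)) ∧ (∀ k, F k ⊆ G) ∧ A ⊆ ⋃ k, F k := by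
  obtain ⟨U, hUopen, rfl⟩ := hG.eq_iInter_nat
  choose C hCmono hCclosed hCU hUC using fun i =>
    exists_monotone_isClosed_iUnion_interior_of_isOpen (hUopen i)
  -- Listing each `U j` infinitely often makes every tail of the list still cut out `⋂ j, U j`.
  obtain ⟨i, hi⟩ : ∃ i : ℕ → ℕ, ∀ j k, ∃ n ≥ k, i n = j :=
    ⟨fun n => n.unpair.1, fun j k =>
      ⟨Nat.pair j k, Nat.right_le_pair j k, congrArg Prod.fst (Nat.unpair_pair j k)⟩⟩
  let u : ℕ → ℕ → Set A := fun n m => (↑) ⁻¹' interior (C (i n) m)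
  have hcov : ∀ n, ⋃ m, u n m = univ := fun n => eq_univ_of_forall fun x => by
    rw [← preimage_iUnion]
    exact hUC _ (mem_iInter.1 (hAG x.2) _)
  obtain ⟨M, hM⟩ := hA.exists_eventually_mem
    (fun n m => isOpen_interior.preimage continuous_subtype_val)
    (fun n _ _ h => preimage_mono (interior_mono (hCmono (i n) h))) hcov
  refine ⟨fun k => ⋂ n ≥ k, C (i n) (M n),
    fun k => isClosed_biInter fun n _ => hCclosed (i n) (M n),
    fun k x hx => mem_iInter.2 fun j => ?_, fun x hx => ?_⟩
  · obtain ⟨n, hkn, rfl⟩ := hi j k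
    exact hCU (i n) (M n) (mem_iInter₂.1 hx n hkn)
  · obtain ⟨k, hk⟩ := eventually_atTop.1 (hM ⟨x, hx⟩)
    exact mem_iUnion.2 ⟨k, mem_iInter₂.2 fun n hn => interior_subset (hk n hn)⟩

lemma isMeagre_iUnion_of_isClosed_of_disjoint_dense {F : ℕ → Set E} {D : Set E}
    (hF : ∀ k, IsClosed (F k)) (hD : Dense D) (hdisj : ∀ k, Disjoint (F k) D) :
    IsMeagre (⋃ k, F k) :=
  isMeagre_iUnion fun k => (isClosed_isNowhereDense_iff_compl.2
    ⟨(hF k).isOpen_compl, hD.mono (hdisj k).subset_compl_left⟩).2.isMeagre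

theorem Ufin.isMeagre_preimage [T6Space E] (hA : Ufin (X := A) IsGammaCover) {Y : Type*}
    [TopologicalSpace Y] {f : Y → E} (hf : Continuous f) (hdense : Dense (f ⁻¹' Aᶜ))
    [SeparableSpace (f ⁻¹' Aᶜ)] : IsMeagre (f ⁻¹' A) := by
  obtain ⟨D, hDA, hDcount, hD⟩ := hdense.exists_countable_dense_subset
  obtain ⟨F, hFclosed, hFD, hAF⟩ := hA.exists_isClosed_subset_iUnion
    (hDcount.image f).isGδ_compl (subset_compl_comm.1 (image_subset_iff.2 hDA))
  refine .mono (preimage_mono hAF) ?_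
  rw [preimage_iUnion]
  exact isMeagre_iUnion_of_isClosed_of_disjoint_dense (fun k => (hFclosed k).preimage hf) hD
    fun k => disjoint_left.2 fun y hyF hyD => hFD k hyF (mem_image_of_mem f hyD)

lemma subset_closure_diff_of_perfect [RegularSpace E] (hP : Perfect P)
    (hperf : ∀ Q : Set E, Perfect Q → Q.Nonempty → ¬ Q ⊆ A) : P ⊆ closure (P \ A) := by
  intro x hxP
  by_contra hx
  obtain ⟨K, hKx, hKclosed, hK⟩ := exists_mem_nhds_isClosed_subset
    (isClosed_closure.isOpen_compl.mem_nhds hx)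
  obtain ⟨hQ, hQne⟩ := hP.closure_nhds_inter x hxP (mem_interior_iff_mem_nhds.2 hKx) isOpen_interior
  have hQKP : closure (interior K ∩ P) ⊆ K ∩ P :=
    closure_minimal (inter_subset_inter_left P interior_subset) (hKclosed.inter hP.closed)
  refine hperf _ hQ hQne fun y hy => ?_
  by_contra hyA
  exact hK (hQKP hy).1 (subset_closure ⟨(hQKP hy).2, hyA⟩)

theorem stmt17_general [MetrizableSpace E] [SecondCountableTopology E]
    (hA : Ufin (X := A) IsGammaCover)
    (hperf : ∀ Q : Set E, Perfect Q → Q.Nonempty → ¬ Q ⊆ A) (hP : Perfect P) :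
    IsMeagre ((↑) ⁻¹' A : Set P) := by
  have hdense : Dense ((↑) ⁻¹' Aᶜ : Set P) := by
    rw [Subtype.dense_iff, Subtype.image_preimage_coe, ← sdiff_eq]
    exact subset_closure_diff_of_perfect hP hperf
  exact hA.isMeagre_preimage continuous_subtype_val hdense

end Ambient

lemma isPerfectSet_iff {P : Set ℝ} : IsPerfectSet P ↔ P.Nonempty ∧ Perfect P := by
  simp only [IsPerfectSet, perfect_def, Preperfect, accPt_principal_iff_clusterPt,
    mem_closure_iff_clusterPt]

theorem stmt17 (X : Set ℝ)
    (h1 : Ufin (X := ↥X) IsGammaCover)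
    (h2 : ∀ P : Set ℝ, IsPerfectSet P → ¬ P ⊆ X) :
    ∀ P : Set ℝ, IsPerfectSet P → IsMeagre {y : ↥P | (y : ℝ) ∈ X} := fun _ hP =>
  stmt17_general h1 (fun Q hQ hne => h2 Q (isPerfectSet_iff.2 ⟨hne, hQ⟩)) (isPerfectSet_iff.1 hP).2
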